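/- Let H be a Hilbert space and T a bounded operator on H with ‖Th‖_H ≥ ‖h‖_H for all h ∈ H. Let M be a Hilbert space contractively contained in H, and let F be a finite-dimensional subspace of H with M ∩ F = {0}, such that Th ∈ M implies h ∈ M + F, and ‖Th‖_M ≥ ‖h‖_⊕ whenever Th ∈ M, where M ⊕ F is the Hilbert space M + F with norm ‖a + b‖²_⊕ = ‖a‖²_M + ‖b‖²_H for a ∈ M, b ∈ F. Let P, Q, L be the orthogonal projections of M ⊕ F onto M ∩ TH, onto M ⊖ (M ∩ TH), and onto F respectively, and let R : M ⊕ F → H be the map with T(Rg) = Pg for all g ∈ M ⊕ F. Then R maps M ⊕ F into M ⊕ F and is a contraction on M ⊕ F, and for every h ∈ M and every nonnegative integer m: h = Σ_{k=0}^m T^k Q R^k h + T^{m+1} R^{m+1} h + T Σ_{k=1}^m T^{k−1} L R^k h, and ‖h‖²_M ≥ Σ_{k=0}^m ‖Q R^k h‖²_M + Σ_{k=1}^m ‖L R^k h‖²_H. -/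

import Mathlib

noncomputable section
set_option synthInstance.maxHeartbeats 1000000
set_option maxHeartbeats 1000000

/-- The Hilbert space `M ⊕ F` with norm `‖(a, b)‖² = ‖a‖² + ‖b‖²`. -/
abbrev DSp (M F : Type*) := WithLp 2 (M × F)

/-- The embedding of `M ⊕ F` into `H`, `(m, v) ↦ ι m + v`. -/
def jmap {H : Type*} [NormedAddCommGroup H] [InnerProductSpace ℂ H]
    {M : Type*} [NormedAddCommGroup M] [InnerProductSpace ℂ M]
    (ι : M →ₗ[ℂ] H) (F : Submodule ℂ H) (d : DSp M ↥F) : H :=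
  ι (WithLp.equiv 2 (M × ↥F) d).1 + ((WithLp.equiv 2 (M × ↥F) d).2 : H)

/-- The canonical embedding of `M` into `M ⊕ F`, `m ↦ (m, 0)`. -/
def embD {M F : Type*} [NormedAddCommGroup M] [NormedAddCommGroup F] (m : M) : DSp M F :=
  (WithLp.equiv 2 (M × F)).symm (m, 0)

/-- The copy of `M` inside `M ⊕ F`. -/
def Mcopy {H : Type*} [NormedAddCommGroup H] [InnerProductSpace ℂ H]
    {M : Type*} [NormedAddCommGroup M] [InnerProductSpace ℂ M]
    (F : Submodule ℂ H) : Submodule ℂ (DSp M ↥F) :=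
  Submodule.comap ((LinearMap.snd ℂ M ↥F).comp
    (WithLp.linearEquiv 2 ℂ (M × ↥F)).toLinearMap) ⊥

/-- The copy of `F` inside `M ⊕ F`. -/
def Fcopy {H : Type*} [NormedAddCommGroup H] [InnerProductSpace ℂ H]
    {M : Type*} [NormedAddCommGroup M] [InnerProductSpace ℂ M]
    (F : Submodule ℂ H) : Submodule ℂ (DSp M ↥F) :=
  Submodule.comap ((LinearMap.fst ℂ M ↥F).comp
    (WithLp.linearEquiv 2 ℂ (M × ↥F)).toLinearMap) ⊥

/-- The subspace `M ∩ TH` of `M ⊕ F`: pairs `(m, 0)` with `ι m` in the range of `T`. -/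
def KTH {H : Type*} [NormedAddCommGroup H] [InnerProductSpace ℂ H]
    {M : Type*} [NormedAddCommGroup M] [InnerProductSpace ℂ M]
    (ι : M →ₗ[ℂ] H) (F : Submodule ℂ H) (T : H →L[ℂ] H) : Submodule ℂ (DSp M ↥F) :=
  Mcopy F ⊓ Submodule.comap (ι.comp ((LinearMap.fst ℂ M ↥F).comp
    (WithLp.linearEquiv 2 ℂ (M × ↥F)).toLinearMap)) (LinearMap.range (T : H →ₗ[ℂ] H))

/-!
Since `M = Fᗮ` inside `M ⊕ F`, every `d ∈ M ⊕ F` is the orthogonal sum `P d + Q d + L d`, and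
`T` carries `R d` to `P d`. So each point `x` of the orbit of `h` under `R` satisfies
`x = Q x + L x + T (R x)`, which telescopes to the expansion of `h`; Pythagoras together with
`‖R x‖ ≤ ‖P x‖` gives `‖Q x‖² + ‖L x‖² + ‖R x‖² ≤ ‖x‖²`, which telescopes to the norm inequality.
In the expansion `L h = 0` because `h` is orthogonal to `F`.
-/

open Finset

section Telescoping

lemma eq_sum_pow_apply_add_pow_apply {S V : Type*} [Semiring S] [AddCommMonoid V] [Module S V]
    (T : Module.End S V) {x y : ℕ → V} (hxy : ∀ k, x k = y k + T (x (k + 1))) (n : ℕ) :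
    x 0 = ∑ k ∈ range n, (T ^ k) (y k) + (T ^ n) (x n) := by
  induction n with
  | zero => simp
  | succ n ih =>
    rw [ih, hxy n, map_add, sum_range_succ, add_assoc, pow_succ, Module.End.mul_apply]

lemma sum_range_add_le_of_add_succ_le {G : Type*} [AddCommMonoid G] [PartialOrder G]
    [IsOrderedAddMonoid G] {a b : ℕ → G} (hab : ∀ k, b k + a (k + 1) ≤ a k) (n : ℕ) :
    ∑ k ∈ range n, b k + a n ≤ a 0 := by
  induction n with
  | zero => simp
  | succ n ih =>
    calc ∑ k ∈ range (n + 1), b k + a (n + 1)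
        = ∑ k ∈ range n, b k + (b n + a (n + 1)) := by rw [sum_range_succ, add_assoc]
      _ ≤ ∑ k ∈ range n, b k + a n := by gcongr; exact hab n
      _ ≤ a 0 := ih

end Telescoping

section OrthogonalProjection

variable {𝕜 E : Type*} [RCLike 𝕜] [NormedAddCommGroup E] [InnerProductSpace 𝕜 E]

/-- `P` is the orthogonal projection onto `K`, characterised pointwise. A predicate is used instead
of `Submodule.starProjection` because the projections are given as maps with these properties;
linearity is left out since uniqueness forces it. -/
structure IsOrthogonalProjection (K : Submodule 𝕜 E) (P : E → E) : Prop where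
  mem : ∀ d, P d ∈ K
  sub_mem_orthogonal : ∀ d, d - P d ∈ Kᗮ

namespace IsOrthogonalProjection

variable {K F : Submodule 𝕜 E} {P Q L : E → E}

lemma apply_eq (hP : IsOrthogonalProjection K P) {d e : E} (he : e ∈ K) (hde : d - e ∈ Kᗮ) :
    P d = e := by
  have hK : P d - e ∈ K := K.sub_mem (hP.mem d) he
  have hKorth : P d - e ∈ Kᗮ := by
    simpa using Kᗮ.sub_mem hde (hP.sub_mem_orthogonal d)
  exact sub_eq_zero.1 (Submodule.disjoint_def.1 K.orthogonal_disjoint _ hK hKorth)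

lemma apply_eq_zero (hP : IsOrthogonalProjection K P) {d : E} (hd : d ∈ Kᗮ) : P d = 0 :=
  hP.apply_eq K.zero_mem (by simpa using hd)

lemma norm_sq_eq (hP : IsOrthogonalProjection K P) (d : E) :
    ‖d‖ ^ 2 = ‖P d‖ ^ 2 + ‖d - P d‖ ^ 2 := by
  have horth := K.inner_right_of_mem_orthogonal (hP.mem d) (hP.sub_mem_orthogonal d)
  simpa [sq] using norm_add_sq_eq_norm_sq_add_norm_sq_of_inner_eq_zero _ _ horth

lemma norm_apply_le (hP : IsOrthogonalProjection K P) (d : E) : ‖P d‖ ≤ ‖d‖ :=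
  le_of_sq_le_sq (by rw [hP.norm_sq_eq d]; exact le_add_of_nonneg_right (sq_nonneg _))
    (norm_nonneg d)

lemma add_add_eq (hKF : K ⟂ F) (hP : IsOrthogonalProjection K P)
    (hQ : IsOrthogonalProjection (Fᗮ ⊓ Kᗮ) Q) (hL : IsOrthogonalProjection F L) (d : E) :
    P d + Q d + L d = d := by
  have hLK : L d ∈ Kᗮ := hKF.ge (hL.mem d)
  have hmem : d - P d - L d ∈ Fᗮ ⊓ Kᗮ := by
    refine ⟨?_, Kᗮ.sub_mem (hP.sub_mem_orthogonal d) hLK⟩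
    rw [sub_right_comm]
    exact Fᗮ.sub_mem (hL.sub_mem_orthogonal d) (hKF.le (hP.mem d))
  have horth : d - (d - P d - L d) ∈ (Fᗮ ⊓ Kᗮ)ᗮ := by
    rw [sub_sub, sub_sub_cancel]
    exact add_mem
      (Submodule.orthogonal_le inf_le_right (K.le_orthogonal_orthogonal (hP.mem d)))
      (Submodule.orthogonal_le inf_le_left (F.le_orthogonal_orthogonal (hL.mem d)))
  rw [hQ.apply_eq hmem horth]
  abel

lemma norm_sq_add_add_eq (hKF : K ⟂ F) (hP : IsOrthogonalProjection K P)
    (hQ : IsOrthogonalProjection (Fᗮ ⊓ Kᗮ) Q) (hL : IsOrthogonalProjection F L) (d : E) :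
    ‖P d‖ ^ 2 + ‖Q d‖ ^ 2 + ‖L d‖ ^ 2 = ‖d‖ ^ 2 := by
  have hPQ : inner 𝕜 (P d) (Q d) = 0 :=
    K.inner_right_of_mem_orthogonal (hP.mem d) (hQ.mem d).2
  have hPQL : inner 𝕜 (P d + Q d) (L d) = 0 :=
    F.inner_left_of_mem_orthogonal (hL.mem d) (add_mem (hKF.le (hP.mem d)) (hQ.mem d).1)
  simp only [sq]
  rw [← norm_add_sq_eq_norm_sq_add_norm_sq_of_inner_eq_zero _ _ hPQ,
    ← norm_add_sq_eq_norm_sq_add_norm_sq_of_inner_eq_zero _ _ hPQL, add_add_eq hKF hP hQ hL]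

end IsOrthogonalProjection

end OrthogonalProjection

section OrbitExpansion

open IsOrthogonalProjection

variable {𝕜 E H : Type*} [RCLike 𝕜] [NormedAddCommGroup E] [InnerProductSpace 𝕜 E]
  {K F : Submodule 𝕜 E} {P Q L R : E → E}

lemma apply_eq_sum_pow_add_pow_add_sum_pow [AddCommGroup H] [Module 𝕜 H]
    {j : E →ₗ[𝕜] H} {T : Module.End 𝕜 H} (hKF : K ⟂ F) (hP : IsOrthogonalProjection K P)
    (hQ : IsOrthogonalProjection (Fᗮ ⊓ Kᗮ) Q) (hL : IsOrthogonalProjection F L)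
    (hTR : ∀ d, T (j (R d)) = j (P d)) {g : E} (hg : g ∈ Fᗮ) (m : ℕ) :
    j g = ∑ k ∈ range (m + 1), (T ^ k) (j (Q (R^[k] g))) + (T ^ (m + 1)) (j (R^[m + 1] g))
      + T (∑ k ∈ range m, (T ^ k) (j (L (R^[k + 1] g)))) := by
  have hstep (k : ℕ) : j (R^[k] g)
      = (j (Q (R^[k] g)) + j (L (R^[k] g))) + T (j (R^[k + 1] g)) := by
    rw [Function.iterate_succ_apply', hTR, ← map_add, ← map_add, add_comm, ← add_assoc,
      add_add_eq hKF hP hQ hL]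
  have hsumL : ∑ k ∈ range (m + 1), (T ^ k) (j (L (R^[k] g)))
      = T (∑ k ∈ range m, (T ^ k) (j (L (R^[k + 1] g)))) := by
    simp only [sum_range_succ', Function.iterate_zero_apply, hL.apply_eq_zero hg, map_zero,
      add_zero, map_sum, pow_succ', Module.End.mul_apply]
  have hexp := eq_sum_pow_apply_add_pow_apply T hstep (m + 1)
  simp only [map_add, sum_add_distrib, hsumL] at hexp
  exact hexp.trans (add_right_comm _ _ _)

lemma sum_norm_sq_add_sum_norm_sq_le (hKF : K ⟂ F) (hP : IsOrthogonalProjection K P)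
    (hQ : IsOrthogonalProjection (Fᗮ ⊓ Kᗮ) Q) (hL : IsOrthogonalProjection F L)
    (hRP : ∀ d, ‖R d‖ ≤ ‖P d‖) (g : E) (m : ℕ) :
    ∑ k ∈ range (m + 1), ‖Q (R^[k] g)‖ ^ 2 + ∑ k ∈ range m, ‖L (R^[k + 1] g)‖ ^ 2
      ≤ ‖g‖ ^ 2 := by
  have hstep (k : ℕ) : ‖Q (R^[k] g)‖ ^ 2 + ‖L (R^[k] g)‖ ^ 2 + ‖R^[k + 1] g‖ ^ 2
      ≤ ‖R^[k] g‖ ^ 2 := by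
    rw [Function.iterate_succ_apply', ← norm_sq_add_add_eq hKF hP hQ hL (R^[k] g)]
    linarith [pow_le_pow_left₀ (norm_nonneg _) (hRP (R^[k] g)) 2]
  have htel := sum_range_add_le_of_add_succ_le (a := fun k => ‖R^[k] g‖ ^ 2) hstep (m + 1)
  rw [sum_add_distrib, sum_range_succ' (fun k => ‖L (R^[k] g)‖ ^ 2)] at htel
  simp only [Function.iterate_zero_apply] at htel
  linarith [sq_nonneg ‖L g‖, sq_nonneg ‖R^[m + 1] g‖]

-- `E`, `Fᗮ` and `j` play the roles of `M ⊕ F`, `M` and the inclusion of `M ⊕ F` into `H`.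
theorem stmt7_general [AddCommGroup H] [Module 𝕜 H]
    (F : Submodule 𝕜 E) (j : E →ₗ[𝕜] H) (T : Module.End 𝕜 H)
    (hlift : ∀ h : H, ∀ g ∈ Fᗮ, T h = j g → ∃ e, j e = h ∧ ‖e‖ ≤ ‖g‖)
    (hP : IsOrthogonalProjection (Fᗮ ⊓ (LinearMap.range T).comap j) P)
    (hQ : IsOrthogonalProjection (Fᗮ ⊓ (Fᗮ ⊓ (LinearMap.range T).comap j)ᗮ) Q)
    (hL : IsOrthogonalProjection F L)
    (R : E → H) (hR : ∀ d, T (R d) = j (P d)) :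
    ∃ R' : E → E,
      (∀ d, j (R' d) = R d) ∧
      (∀ d, ‖R' d‖ ≤ ‖d‖) ∧
      ∀ g ∈ Fᗮ, ∀ m : ℕ,
        j g = ∑ k ∈ range (m + 1), (T ^ k) (j (Q (R'^[k] g)))
            + (T ^ (m + 1)) (j (R'^[m + 1] g))
            + T (∑ k ∈ range m, (T ^ k) (j (L (R'^[k + 1] g)))) ∧
        ∑ k ∈ range (m + 1), ‖Q (R'^[k] g)‖ ^ 2 + ∑ k ∈ range m, ‖L (R'^[k + 1] g)‖ ^ 2
          ≤ ‖g‖ ^ 2 := by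
  have hKF := Submodule.isOrtho_iff_le.2
    (inf_le_left : Fᗮ ⊓ (LinearMap.range T).comap j ≤ Fᗮ)
  choose R' hR' hR'P using fun d => hlift (R d) (P d) (hP.mem d).1 (hR d)
  have hTR' (d : E) : T (j (R' d)) = j (P d) := by rw [hR', hR]
  exact ⟨R', hR', fun d => (hR'P d).trans (hP.norm_apply_le d), fun g hg m =>
    ⟨apply_eq_sum_pow_add_pow_add_sum_pow hKF hP hQ hL hTR' hg m,
      sum_norm_sq_add_sum_norm_sq_le hKF hP hQ hL hR'P g m⟩⟩

end OrbitExpansion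

section DirectSum

lemma norm_embD {M F : Type*} [NormedAddCommGroup M] [NormedAddCommGroup F] (h : M) :
    ‖(embD h : DSp M F)‖ = ‖h‖ :=
  WithLp.norm_toLp_fst 2 M F h

variable {H : Type*} [NormedAddCommGroup H] [InnerProductSpace ℂ H]
  {M : Type*} [NormedAddCommGroup M] [InnerProductSpace ℂ M]
  (ι : M →ₗ[ℂ] H) (F : Submodule ℂ H)

/-- The embedding `jmap` of `M ⊕ F` into `H`, as a linear map. -/
def jmapₗ : DSp M F →ₗ[ℂ] H :=
  ι ∘ₗ WithLp.fstₗ 2 ℂ M F + F.subtype ∘ₗ WithLp.sndₗ 2 ℂ M F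

lemma jmapₗ_apply (d : DSp M F) : jmapₗ ι F d = jmap ι F d := rfl

variable {F}

lemma mem_Mcopy {d : DSp M F} : d ∈ Mcopy (M := M) F ↔ d.snd = 0 := Iff.rfl

lemma mem_Fcopy {d : DSp M F} : d ∈ Fcopy (M := M) F ↔ d.fst = 0 := Iff.rfl

lemma embD_mem_Mcopy (h : M) : (embD h : DSp M F) ∈ Mcopy (M := M) F :=
  mem_Mcopy.2 rfl

variable (F) in
lemma Mcopy_eq_orthogonal_Fcopy : Mcopy (M := M) F = (Fcopy (M := M) F)ᗮ := by
  ext d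
  rw [mem_Mcopy, Submodule.mem_orthogonal]
  constructor
  · intro hd u hu
    simp [WithLp.prod_inner_apply, hd, mem_Fcopy.1 hu]
  · intro hd
    simpa [WithLp.prod_inner_apply] using hd (WithLp.toLp 2 (0, d.snd)) (mem_Fcopy.2 rfl)

lemma jmap_eq_of_mem_Mcopy {d : DSp M F} (hd : d ∈ Mcopy (M := M) F) :
    jmap ι F d = ι d.fst := by
  change ι d.fst + (d.snd : H) = ι d.fst
  rw [mem_Mcopy.1 hd, Submodule.coe_zero, add_zero]

lemma jmap_embD (h : M) : jmap ι F (embD h) = ι h :=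
  jmap_eq_of_mem_Mcopy ι (embD_mem_Mcopy h)

variable (F) in
lemma KTH_eq_Mcopy_inf_comap_jmapₗ (T : H →L[ℂ] H) :
    KTH ι F T = Mcopy F ⊓ (LinearMap.range (T : H →ₗ[ℂ] H)).comap (jmapₗ ι F) := by
  ext d
  rw [KTH, Submodule.mem_inf, Submodule.mem_inf]
  refine and_congr_right fun hd => ?_
  rw [Submodule.mem_comap, Submodule.mem_comap, jmapₗ_apply, jmap_eq_of_mem_Mcopy ι hd]
  rfl

lemma exists_jmap_eq_norm_le {T : H → H}
    (hnearly : ∀ h : H, (∃ m : M, ι m = T h) → ∃ (m : M) (v : F), ι m + ↑v = h)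
    (hnorm : ∀ (m m' : M) (v : F), ι m = T (ι m' + ↑v) → ‖m'‖ ^ 2 + ‖v‖ ^ 2 ≤ ‖m‖ ^ 2)
    (h : H) {g : DSp M F} (hg : g ∈ Mcopy (M := M) F) (hTg : T h = jmap ι F g) :
    ∃ e, jmap ι F e = h ∧ ‖e‖ ≤ ‖g‖ := by
  have hιg : ι g.fst = T h := by rw [hTg, jmap_eq_of_mem_Mcopy ι hg]
  obtain ⟨m, v, rfl⟩ := hnearly h ⟨g.fst, hιg⟩
  refine ⟨WithLp.toLp 2 (m, v), rfl, le_of_sq_le_sq ?_ (norm_nonneg g)⟩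
  rw [WithLp.prod_norm_sq_eq_of_L2, WithLp.prod_norm_sq_eq_of_L2 g, mem_Mcopy.1 hg]
  simpa using hnorm g.fst m v hιg

end DirectSum

/- STATEMENT 7: Let T be a bounded-below operator on a Hilbert space H, M a Hilbert space
contractively contained in H (via ι), F a finite-dimensional subspace of H with M ∩ F = {0},
such that Th ∈ M implies h ∈ M + F and ‖Th‖_M ≥ ‖h‖_⊕ whenever Th ∈ M.  Let P, Q, L be the
orthogonal projections of M ⊕ F onto M ∩ TH, onto M ⊖ (M ∩ TH), and onto F respectively, and
let R be the map with T(Rg) = Pg.  Then R maps M ⊕ F into M ⊕ F, is a contraction, and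
for every h ∈ M and m ≥ 0:
h = Σ_{k=0}^m T^k Q R^k h + T^{m+1} R^{m+1} h + T Σ_{k=1}^m T^{k-1} L R^k h, and
‖h‖²_M ≥ Σ_{k=0}^m ‖Q R^k h‖²_M + Σ_{k=1}^m ‖L R^k h‖²_H. -/
theorem stmt7
    (H : Type*) [NormedAddCommGroup H] [InnerProductSpace ℂ H] [CompleteSpace H]
    (M : Type*) [NormedAddCommGroup M] [InnerProductSpace ℂ M] [CompleteSpace M]
    (T : H →L[ℂ] H) (hT : ∀ h : H, ‖h‖ ≤ ‖T h‖)
    (ι : M →ₗ[ℂ] H) (hinj : Function.Injective ι)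
    (hcontr : ∀ m : M, ‖ι m‖ ≤ ‖m‖)
    (F : Submodule ℂ H) [FiniteDimensional ℂ ↥F]
    -- M ∩ F = {0} :
    (hMF : LinearMap.range ι ⊓ F = ⊥)
    -- Th ∈ M → h ∈ M + F :
    (hnearly : ∀ h : H, (∃ m : M, ι m = T h) → ∃ (m : M) (v : ↥F), ι m + ↑v = h)
    -- ‖Th‖_M ≥ ‖h‖_⊕ whenever Th ∈ M :
    (hnorm : ∀ (m m' : M) (v : ↥F), ι m = T (ι m' + ↑v) → ‖m'‖ ^ 2 + ‖v‖ ^ 2 ≤ ‖m‖ ^ 2)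
    -- P : orthogonal projection of M ⊕ F onto M ∩ TH :
    (P : DSp M ↥F →ₗ[ℂ] DSp M ↥F)
    (hPmem : ∀ d, P d ∈ KTH ι F T) (hPfix : ∀ d ∈ KTH ι F T, P d = d)
    (hPorth : ∀ d, d - P d ∈ (KTH ι F T)ᗮ)
    -- Q : orthogonal projection of M ⊕ F onto M ⊖ (M ∩ TH) :
    (Q : DSp M ↥F →ₗ[ℂ] DSp M ↥F)
    (hQmem : ∀ d, Q d ∈ Mcopy F ⊓ (KTH ι F T)ᗮ)
    (hQfix : ∀ d ∈ Mcopy F ⊓ (KTH ι F T)ᗮ, Q d = d)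
    (hQorth : ∀ d, d - Q d ∈ (Mcopy F ⊓ (KTH ι F T)ᗮ)ᗮ)
    -- L : orthogonal projection of M ⊕ F onto F :
    (L : DSp M ↥F →ₗ[ℂ] DSp M ↥F)
    (hLmem : ∀ d, L d ∈ Fcopy F) (hLfix : ∀ d ∈ Fcopy F, L d = d)
    (hLorth : ∀ d, d - L d ∈ (Fcopy F)ᗮ)
    -- R : the map with T(Rg) = Pg :
    (R : DSp M ↥F → H) (hR : ∀ d, T (R d) = jmap ι F (P d)) :
    -- R maps M ⊕ F into M ⊕ F, is a contraction, and the decompositions hold :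
    ∃ R' : DSp M ↥F → DSp M ↥F,
      (∀ d, jmap ι F (R' d) = R d) ∧
      (∀ d, ‖R' d‖ ≤ ‖d‖) ∧
      (∀ (h : M) (m : ℕ),
        ι h = (∑ k ∈ Finset.range (m + 1),
                 (T ^ k) (jmap ι F (Q (R'^[k] (embD h)))))
              + (T ^ (m + 1)) (jmap ι F (R'^[m + 1] (embD h)))
              + T (∑ k ∈ Finset.range m,
                 (T ^ k) (jmap ι F (L (R'^[k + 1] (embD h))))) ∧
        (∑ k ∈ Finset.range (m + 1), ‖Q (R'^[k] (embD h))‖ ^ 2)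
          + (∑ k ∈ Finset.range m, ‖L (R'^[k + 1] (embD h))‖ ^ 2) ≤ ‖h‖ ^ 2) := by
  have hM := Mcopy_eq_orthogonal_Fcopy (M := M) F
  simp only [KTH_eq_Mcopy_inf_comap_jmapₗ, hM] at hPmem hPorth hQmem hQorth
  obtain ⟨R', hR', hcontraction, hexpansion⟩ :=
    stmt7_general (Fcopy F) (jmapₗ ι F) (T : H →ₗ[ℂ] H)
      (fun h _ hg => exists_jmap_eq_norm_le ι hnearly hnorm h (hM ▸ hg))
      ⟨hPmem, hPorth⟩ ⟨hQmem, hQorth⟩ ⟨hLmem, hLorth⟩ R hR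
  refine ⟨R', hR', hcontraction, fun h m => ?_⟩
  simpa only [jmapₗ_apply, jmap_embD, norm_embD, ← ContinuousLinearMap.toLinearMap_pow,
    ContinuousLinearMap.coe_coe] using hexpansion (embD h) (hM ▸ embD_mem_Mcopy h) m
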